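/- Let 𝔤 be a finite-dimensional real Lie algebra equipped with an inner product ⟨·,·⟩, and assume 𝔤 = 𝔷(𝔤) ⊕ [𝔤,𝔤] as vector spaces. Let Γ be a group acting on 𝔤 by Lie algebra automorphisms each of which preserves ⟨·,·⟩ and fixes 𝔷(𝔤) pointwise. Let 𝔭 ⊆ 𝔤 be a Γ-invariant subspace. Then Γ acts trivially on the subspace (𝔭 ∩ [𝔤,𝔤])^⊥ ∩ 𝔭, i.e., γ·Z = Z for every γ ∈ Γ and every Z ∈ (𝔭 ∩ [𝔤,𝔤])^⊥ ∩ 𝔭, where ^⊥ denotes the orthogonal complement in 𝔤 with respect to ⟨·,·⟩. -/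

import Mathlib

/-! For `Z ∈ 𝔭` orthogonal to `𝔭 ∩ [𝔤,𝔤]`, the difference `γ Z - Z` lies in `𝔭 ∩ [𝔤,𝔤]`, because `γ`
fixes the central component of `Z` and moves the other one within `[𝔤,𝔤]`. So `γ Z` is the sum of
`Z` and a vector orthogonal to `Z`; by Pythagoras this vector is zero, as `γ` preserves lengths. -/

section Sesquilinear

variable {R S : Type*} [CommSemiring R] [CommSemiring S] {σ τ : R →+* S}

theorem apply_add_self_of_apply_eq_zero {V W : Type*} [AddCommMonoid V] [Module R V]
    [AddCommMonoid W] [Module S W] {B : V →ₛₗ[σ] V →ₛₗ[τ] W} (hB : B.IsRefl) {x w : V}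
    (hxw : B x w = 0) : B (x + w) (x + w) = B x x + B w w := by
  simp only [map_add, LinearMap.add_apply, hxw, hB x w hxw, add_zero, zero_add]

theorem eq_of_apply_self_eq_of_apply_sub_eq_zero {V W : Type*} [AddCommGroup V] [Module R V]
    [AddCommGroup W] [Module S W] {B : V →ₛₗ[σ] V →ₛₗ[τ] W} (hB : B.IsRefl)
    (hB_aniso : ∀ x, x ≠ 0 → B x x ≠ 0) {x y : V} (hself : B y y = B x x)
    (hortho : B x (y - x) = 0) : y = x := by
  have pythagoras : B y y = B x x + B (y - x) (y - x) := by
    simpa only [add_sub_cancel] using apply_add_self_of_apply_eq_zero hB hortho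
  by_contra hne
  exact hB_aniso _ (sub_ne_zero.mpr hne) (left_eq_add.mp (hself.symm.trans pythagoras))

end Sesquilinear

section Lie

variable {R L L' : Type*} [CommRing R] [LieRing L] [LieAlgebra R L] [LieRing L'] [LieAlgebra R L']

theorem lieHom_apply_mem_lie_top_top (f : L →ₗ⁅R⁆ L') {x : L}
    (hx : x ∈ ⁅(⊤ : LieIdeal R L), (⊤ : LieIdeal R L)⁆) :
    f x ∈ ⁅(⊤ : LieIdeal R L'), (⊤ : LieIdeal R L')⁆ :=
  LieSubmodule.mono_lie le_top le_top (LieIdeal.map_bracket_le f (LieIdeal.mem_map hx))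

theorem lieHom_apply_sub_self_mem_lie_top_top
    (hL : Codisjoint (LieAlgebra.center R L).toSubmodule
      ⁅(⊤ : LieIdeal R L), (⊤ : LieIdeal R L)⁆.toSubmodule)
    (f : L →ₗ⁅R⁆ L) (hf : ∀ x ∈ LieAlgebra.center R L, f x = x) (x : L) :
    f x - x ∈ ⁅(⊤ : LieIdeal R L), (⊤ : LieIdeal R L)⁆ := by
  obtain ⟨z, d, hz, hd, rfl⟩ := Submodule.codisjoint_iff_exists_add_eq.mp hL x
  rw [map_add, hf z hz, add_sub_add_left_eq_sub]
  exact sub_mem (lieHom_apply_mem_lie_top_top f hd) hd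

theorem stmt7_general {S W : Type*} [CommSemiring S] [AddCommGroup W] [Module S W]
    {σ τ : R →+* S} {B : L →ₛₗ[σ] L →ₛₗ[τ] W} (hB : B.IsRefl)
    (hB_aniso : ∀ x, x ≠ 0 → B x x ≠ 0)
    (hL : Codisjoint (LieAlgebra.center R L).toSubmodule
      ⁅(⊤ : LieIdeal R L), (⊤ : LieIdeal R L)⁆.toSubmodule)
    (f : L →ₗ⁅R⁆ L) (hf_isometry : ∀ x, B (f x) (f x) = B x x)
    (hf_center : ∀ x ∈ LieAlgebra.center R L, f x = x)
    {p : Submodule R L} (hp : ∀ x ∈ p, f x ∈ p) {Z : L} (hZ : Z ∈ p)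
    (hperp : ∀ y ∈ p, y ∈ ⁅(⊤ : LieIdeal R L), (⊤ : LieIdeal R L)⁆ → B Z y = 0) :
    f Z = Z := by
  have hsub_p : f Z - Z ∈ p := p.sub_mem (hp Z hZ) hZ
  have hsub_derived : f Z - Z ∈ ⁅(⊤ : LieIdeal R L), (⊤ : LieIdeal R L)⁆ :=
    lieHom_apply_sub_self_mem_lie_top_top hL f hf_center Z
  exact eq_of_apply_self_eq_of_apply_sub_eq_zero hB hB_aniso (hf_isometry Z)
    (hperp _ hsub_p hsub_derived)

end Lie

/-- Let `𝔤` be a finite-dimensional real Lie algebra with an inner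
product `B`, such that `𝔤 = 𝔷(𝔤) ⊕ [𝔤,𝔤]` as vector spaces.  Let `Γ` act on `𝔤` by Lie
algebra automorphisms, each preserving `B` and fixing `𝔷(𝔤)` pointwise, and let
`𝔭 ⊆ 𝔤` be a `Γ`-invariant subspace.  Then `Γ` acts trivially on
`(𝔭 ∩ [𝔤,𝔤])^⊥ ∩ 𝔭`. -/
theorem stmt7 {L : Type*} [LieRing L] [LieAlgebra ℝ L] [FiniteDimensional ℝ L]
    (B : L →ₗ[ℝ] L →ₗ[ℝ] ℝ)
    (hBsymm : ∀ x y : L, B x y = B y x)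
    (hBposdef : ∀ x : L, x ≠ 0 → 0 < B x x)
    (hzd_sup : (LieSubmodule.toSubmodule (LieAlgebra.center ℝ L) : Submodule ℝ L) ⊔
        (LieSubmodule.toSubmodule (⁅(⊤ : LieIdeal ℝ L), (⊤ : LieIdeal ℝ L)⁆ : LieIdeal ℝ L)) = ⊤)
    (hzd_disj : Disjoint
        (LieSubmodule.toSubmodule (LieAlgebra.center ℝ L) : Submodule ℝ L)
        (LieSubmodule.toSubmodule (⁅(⊤ : LieIdeal ℝ L), (⊤ : LieIdeal ℝ L)⁆ : LieIdeal ℝ L)))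
    {Γ : Type*} [Group Γ] (ρ : Γ → (L ≃ₗ⁅ℝ⁆ L))
    (hone : ∀ x : L, ρ 1 x = x)
    (hmul : ∀ γ₁ γ₂ : Γ, ∀ x : L, ρ (γ₁ * γ₂) x = ρ γ₁ (ρ γ₂ x))
    (hBpres : ∀ γ : Γ, ∀ x y : L, B (ρ γ x) (ρ γ y) = B x y)
    (hfix : ∀ γ : Γ, ∀ x ∈ LieAlgebra.center ℝ L, ρ γ x = x)
    (p : Submodule ℝ L) (hp : ∀ γ : Γ, ∀ x ∈ p, ρ γ x ∈ p) :
    ∀ γ : Γ, ∀ Z ∈ p,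
      (∀ y ∈ p, y ∈ (⁅(⊤ : LieIdeal ℝ L), (⊤ : LieIdeal ℝ L)⁆ : LieIdeal ℝ L) → B Z y = 0) →
      ρ γ Z = Z := by
  exact fun γ _ hZ hperp ↦ stmt7_general (fun x y hxy ↦ (hBsymm y x).trans hxy)
    (fun x hx ↦ (hBposdef x hx).ne') (codisjoint_iff.mpr hzd_sup) (ρ γ : L →ₗ⁅ℝ⁆ L)
    (fun x ↦ hBpres γ x x) (hfix γ) (hp γ) hZ hperp
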